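/- The degree-0 case of the main theorem: every GLₙ(k)-invariant polynomial function on Mₙ(k) under conjugation is a polynomial in the trace powers Tr(X), Tr(X²), …, Tr(Xⁿ). -/

import Mathlib

open MvPolynomial

/-- The generic matrix `X = (x_{ij})` whose entries are the coordinate functions on
`Mₙ(k)`. -/
noncomputable def genericMatrix (k : Type*) [Field k] (n : ℕ) :
    Matrix (Fin n) (Fin n) (MvPolynomial (Fin n × Fin n) k) :=
  Matrix.of fun i j => MvPolynomial.X (i, j)

/-- The action of `g ∈ GLₙ(k)` on polynomial functions on `Mₙ(k)` induced by the
conjugation action `ad(g) X = g X g⁻¹`: substitute `x_{ij} ↦ (g X g⁻¹)_{ij}`. -/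
noncomputable def conjSubst (k : Type*) [Field k] (n : ℕ) (g : GL (Fin n) k) :
    MvPolynomial (Fin n × Fin n) k →ₐ[k] MvPolynomial (Fin n × Fin n) k :=
  MvPolynomial.aeval fun ij : Fin n × Fin n =>
    ((((g : Matrix (Fin n) (Fin n) k).map MvPolynomial.C) * genericMatrix k n *
      (((g⁻¹ : GL (Fin n) k) : Matrix (Fin n) (Fin n) k).map MvPolynomial.C) :
        Matrix (Fin n) (Fin n) (MvPolynomial (Fin n × Fin n) k))) ij.1 ij.2

/-!
Where the Krylov matrix `[v, Av, …, Aⁿ⁻¹v]` of a matrix `A` is invertible, it conjugates `A` to the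
companion matrix of its characteristic polynomial. For `v = (1, …, 1)` and the generic matrix its
determinant is a nonzero polynomial, since at a diagonal matrix it is a Vandermonde determinant. So
over an infinite field an invariant `f` satisfies `f(X) = f(companion χ_X)`, a polynomial in the
coefficients of `χ_X`. Newton's identities express these coefficients by the traces
`Tr X, …, Tr (Xⁿ)` as soon as `n!` is invertible.
-/

section Newton

open scoped Polynomial

variable {ι R : Type*} [Fintype ι] [DecidableEq ι] [CommRing R]

theorem derivative_det (M : Matrix ι ι R[X]) :
    Polynomial.derivative M.det = (M.adjugate * M.map Polynomial.derivative).trace := by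
  have trace_eq : (M.adjugate * M.map Polynomial.derivative).trace =
      ∑ i, (M.updateCol i fun j => Polynomial.derivative (M j i)).det := by
    refine Finset.sum_congr rfl fun i _ => ?_
    rw [← Matrix.cramer_apply, Matrix.cramer_eq_adjugate_mulVec]
    rfl
  simp only [trace_eq, Matrix.det_apply', Polynomial.derivative_sum]
  rw [Finset.sum_comm]
  refine Finset.sum_congr rfl fun σ _ => ?_
  rw [Polynomial.derivative_intCast_mul, Polynomial.derivative_prod_finset, Finset.mul_sum]
  refine Finset.sum_congr rfl fun i _ => ?_
  rw [← Finset.prod_erase_mul _ _ (Finset.mem_univ i), Matrix.updateCol_self]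
  congr 2
  refine Finset.prod_congr rfl fun j hj => ?_
  rw [Matrix.updateCol_ne (Finset.ne_of_mem_erase hj)]

theorem trace_coeff_matPolyEquiv {R : Type*} [CommSemiring R] (M : Matrix ι ι R[X]) (i : ℕ) :
    ((matPolyEquiv M).coeff i).trace = M.trace.coeff i := by
  simp [Matrix.trace, matPolyEquiv_coeff_apply]

variable (A : Matrix ι ι R)

theorem derivative_charpoly : Polynomial.derivative A.charpoly = A.charmatrix.adjugate.trace := by
  have map_derivative : A.charmatrix.map Polynomial.derivative = 1 := by
    ext i j : 1
    by_cases h : i = j <;> simp [Matrix.one_apply, h]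
  rw [Matrix.charpoly, derivative_det, map_derivative, mul_one]

theorem coeff_X_mul_matPolyEquiv_adjugate_charmatrix_eq_add (i : ℕ) :
    (Polynomial.X * matPolyEquiv A.charmatrix.adjugate).coeff i =
      A * (Polynomial.X * matPolyEquiv A.charmatrix.adjugate).coeff (i + 1) +
        A.charpoly.coeff i • 1 := by
  have adjugate_identity : (Polynomial.X - Polynomial.C A) * matPolyEquiv A.charmatrix.adjugate =
      A.charpoly.map (algebraMap R (Matrix ι ι R)) := by
    rw [← Matrix.matPolyEquiv_charmatrix, ← map_mul, Matrix.mul_adjugate, ← Matrix.charpoly,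
      matPolyEquiv_smul_one]
  rw [sub_mul, sub_eq_iff_eq_add'] at adjugate_identity
  rw [Polynomial.coeff_X_mul, ← Polynomial.coeff_C_mul, adjugate_identity, Polynomial.coeff_add,
    Polynomial.coeff_map, Algebra.algebraMap_eq_smul_one]

-- The factor `X` makes coefficient `0` of this formula the Cayley–Hamilton theorem.
theorem coeff_X_mul_matPolyEquiv_adjugate_charmatrix (i : ℕ) :
    (Polynomial.X * matPolyEquiv A.charmatrix.adjugate).coeff i =
      ∑ j ∈ Finset.range (Fintype.card ι + 1 - i), A.charpoly.coeff (i + j) • A ^ j := by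
  nontriviality R
  set P := Polynomial.X * matPolyEquiv A.charmatrix.adjugate
  induction hd : Fintype.card ι + 1 + P.natDegree + 1 - i generalizing i with
  | zero =>
    rw [Polynomial.coeff_eq_zero_of_natDegree_lt (by lia), Nat.sub_eq_zero_of_le (by lia),
      Finset.sum_range_zero]
  | succ d ih =>
    rw [coeff_X_mul_matPolyEquiv_adjugate_charmatrix_eq_add, ih (i + 1) (by lia)]
    rcases le_or_gt i (Fintype.card ι) with hi | hi
    · rw [show Fintype.card ι + 1 - i = Fintype.card ι + 1 - (i + 1) + 1 by lia,
        Finset.sum_range_succ', Finset.mul_sum]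
      simp only [mul_smul_comm, ← pow_succ', pow_zero, add_zero, add_right_comm i 1, ← add_assoc]
    · rw [Polynomial.coeff_eq_zero_of_natDegree_lt (by rwa [A.charpoly_natDegree_eq_dim]),
        Nat.sub_eq_zero_of_le (by lia), Nat.sub_eq_zero_of_le (by lia)]
      simp

theorem natCast_mul_coeff_charpoly (i : ℕ) :
    i * A.charpoly.coeff i =
      ∑ j ∈ Finset.range (Fintype.card ι + 1 - i), A.charpoly.coeff (i + j) * (A ^ j).trace := by
  have h := congrArg Matrix.trace (coeff_X_mul_matPolyEquiv_adjugate_charmatrix A i)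
  simp only [Matrix.trace_sum, Matrix.trace_smul, smul_eq_mul] at h
  rw [← h]
  cases i with
  | zero => simp
  | succ i =>
    rw [Polynomial.coeff_X_mul, trace_coeff_matPolyEquiv, ← derivative_charpoly,
      Polynomial.coeff_derivative, mul_comm, Nat.cast_succ]

theorem natCast_card_sub_mul_coeff_charpoly {i : ℕ} (hi : i ≤ Fintype.card ι) :
    ((Fintype.card ι - i : ℕ) : R) * A.charpoly.coeff i =
      -∑ j ∈ Finset.range (Fintype.card ι - i),
        A.charpoly.coeff (i + (j + 1)) * (A ^ (j + 1)).trace := by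
  have h := natCast_mul_coeff_charpoly A i
  rw [Nat.sub_add_comm hi, Finset.sum_range_succ', add_zero, pow_zero, Matrix.trace_one] at h
  rw [Nat.cast_sub hi]
  linear_combination -h

theorem coeff_charpoly_mem_of_trace_pow_mem {k : Type*} [CommRing k] [Algebra k R]
    (hk : IsUnit ((Fintype.card ι).factorial : k)) {S : Subalgebra k R}
    (hS : ∀ l, 1 ≤ l → l ≤ Fintype.card ι → (A ^ l).trace ∈ S) (i : ℕ) :
    A.charpoly.coeff i ∈ S := by
  nontriviality R
  induction hd : Fintype.card ι - i using Nat.strong_induction_on generalizing i with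
  | _ d ih =>
    rcases lt_trichotomy i (Fintype.card ι) with hi | rfl | hi
    · have hunit : IsUnit ((Fintype.card ι - i : ℕ) : k) :=
        isUnit_of_dvd_unit (Nat.cast_dvd_cast (Nat.dvd_factorial (by lia) (by lia))) hk
      have hsmul : ((Fintype.card ι - i : ℕ) : k) • A.charpoly.coeff i ∈ S := by
        rw [Algebra.smul_def, map_natCast, natCast_card_sub_mul_coeff_charpoly A hi.le]
        refine S.neg_mem (S.sum_mem fun j hj => ?_)
        rw [Finset.mem_range] at hj
        exact S.mul_mem (ih _ (by lia) _ rfl) (hS _ (by lia) (by lia))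
      have := S.smul_mem hsmul (↑hunit.unit⁻¹ : k)
      rwa [smul_smul, hunit.val_inv_mul, one_smul] at this
    · rw [← A.charpoly_natDegree_eq_dim, A.charpoly_monic.coeff_natDegree]
      exact S.one_mem
    · rw [Polynomial.coeff_eq_zero_of_natDegree_lt (by rwa [A.charpoly_natDegree_eq_dim])]
      exact S.zero_mem

end Newton

section Krylov

open Matrix

variable {ι R S : Type*} {n : ℕ}

/-- The companion matrix of a monic polynomial `p` of degree `n`, with the coefficients of `p` in
the last column. The size `n` is a separate argument so that it need not be `p.natDegree`
definitionally. -/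
def companionMatrix [Ring R] (n : ℕ) (p : Polynomial R) : Matrix (Fin n) (Fin n) R :=
  of fun i j => if (j : ℕ) + 1 = n then -p.coeff i else if (i : ℕ) = j + 1 then 1 else 0

theorem companionMatrix_map [Ring R] [Ring S] (φ : R →+* S) (p : Polynomial R) :
    (companionMatrix n p).map φ = companionMatrix n (p.map φ) := by
  ext i j
  simp [companionMatrix, apply_ite φ]

variable [Fintype ι] [DecidableEq ι]

/-- The Krylov matrix `[v, Av, …, Aⁿ⁻¹v]`, a change of basis from `A` to a companion matrix when it
is invertible. -/
def krylovMatrix [Semiring R] (A : Matrix ι ι R) (v : ι → R) (n : ℕ) : Matrix ι (Fin n) R :=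
  of fun i j => (A ^ (j : ℕ) *ᵥ v) i

theorem krylovMatrix_map [Semiring R] [Semiring S] (φ : R →+* S) (A : Matrix ι ι R) (v : ι → R) :
    (krylovMatrix A v n).map φ = krylovMatrix (A.map φ) (φ ∘ v) n := by
  ext i j
  simp [krylovMatrix, RingHom.map_mulVec, Matrix.map_pow]

theorem krylovMatrix_diagonal_one [CommRing R] (d : Fin n → R) :
    krylovMatrix (diagonal d) 1 n = vandermonde d := by
  ext i j
  simp [krylovMatrix, diagonal_pow, mulVec_diagonal]

theorem pow_natDegree_mulVec_of_aeval_eq_zero [CommRing R] {A : Matrix ι ι R} {p : Polynomial R}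
    (hp : p.Monic) (hA : Polynomial.aeval A p = 0) (v : ι → R) :
    A ^ p.natDegree *ᵥ v = ∑ j : Fin p.natDegree, -p.coeff j • (A ^ (j : ℕ) *ᵥ v) := by
  rw [Polynomial.aeval_eq_sum_range, Finset.sum_range_succ, hp.coeff_natDegree, one_smul] at hA
  rw [eq_neg_of_add_eq_zero_right hA, neg_mulVec, sum_mulVec, Finset.sum_range]
  simp only [smul_mulVec, neg_smul, Finset.sum_neg_distrib]

theorem mul_krylovMatrix [CommRing R] {A : Matrix ι ι R} {p : Polynomial R} (hp : p.Monic)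
    (hn : p.natDegree = n) (hA : Polynomial.aeval A p = 0) (v : ι → R) :
    A * krylovMatrix A v n = krylovMatrix A v n * companionMatrix n p := by
  subst hn
  ext i j
  have mul_apply_eq : (A * krylovMatrix A v p.natDegree) i j = (A ^ (j + 1 : ℕ) *ᵥ v) i := by
    rw [pow_succ', ← mulVec_mulVec]
    rfl
  rw [mul_apply_eq, mul_apply]
  by_cases hj : (j : ℕ) + 1 = p.natDegree
  · rw [hj, pow_natDegree_mulVec_of_aeval_eq_zero hp hA, Finset.sum_apply]
    simp [krylovMatrix, companionMatrix, hj, mul_comm]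
  · have eq_succ_iff (l : Fin p.natDegree) : (l : ℕ) = j + 1 ↔ l = ⟨j + 1, by lia⟩ := by
      rw [Fin.ext_iff]
    simp [krylovMatrix, companionMatrix, hj, eq_succ_iff]

end Krylov

section Invariants

theorem eq_of_eval_eq_of_eval_ne_zero {σ R : Type*} [CommRing R] [IsDomain R] [Infinite R]
    {d p q : MvPolynomial σ R} (hd : d ≠ 0) (h : ∀ x, eval x d ≠ 0 → eval x p = eval x q) :
    p = q := by
  refine mul_left_cancel₀ hd (MvPolynomial.funext fun x => ?_)
  rw [map_mul, map_mul, mul_eq_mul_left_iff]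
  exact or_iff_not_imp_right.mpr (h x)

variable {k : Type*} [Field k] {n : ℕ}

theorem genericMatrix_map_eval (A : Matrix (Fin n) (Fin n) k) :
    (genericMatrix k n).map (eval fun p => A p.1 p.2) = A :=
  Matrix.mvPolynomialX_mapMatrix_eval A

theorem eval_aeval_eq_eval {σ τ R : Type*} [CommSemiring R] (x : σ → R)
    (v : τ → MvPolynomial σ R) (f : MvPolynomial τ R) :
    eval x (aeval v f) = eval (fun t => eval x (v t)) f :=
  eval₂Hom_bind₁ (RingHom.id R) x v f

theorem eval_conjSubst (g : GL (Fin n) k) (f : MvPolynomial (Fin n × Fin n) k)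
    (A : Matrix (Fin n) (Fin n) k) :
    eval (fun p => A p.1 p.2) (conjSubst k n g f) =
      eval (fun p => (g.val * A * g⁻¹.val) p.1 p.2) f := by
  have map_C_map_eval (M : Matrix (Fin n) (Fin n) k) :
      (M.map C).map (eval fun p : Fin n × Fin n => A p.1 p.2) = M := by
    ext i j
    simp
  rw [conjSubst, eval_aeval_eq_eval]
  simp only [← Matrix.map_apply (f := eval _), Matrix.map_mul, map_C_map_eval,
    genericMatrix_map_eval]

theorem eval_eq_eval_of_mul_eq_mul {f : MvPolynomial (Fin n × Fin n) k}
    (hf : ∀ g : GL (Fin n) k, conjSubst k n g f = f) {A B P : Matrix (Fin n) (Fin n) k}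
    (hP : P.det ≠ 0) (h : A * P = P * B) :
    eval (fun p => A p.1 p.2) f = eval (fun p => B p.1 p.2) f := by
  let g : GL (Fin n) k := Matrix.GeneralLinearGroup.mkOfDetNeZero P hP
  have conj_eq : g.val * B * g⁻¹.val = A := by
    rw [Units.mul_inv_eq_iff_eq_mul]
    exact h.symm
  rw [← conj_eq, ← eval_conjSubst, hf]

theorem det_krylovMatrix_genericMatrix_ne_zero [Infinite k] :
    (krylovMatrix (genericMatrix k n) 1 n).det ≠ 0 := by
  let d : Fin n ↪ k := Fin.valEmbedding.trans (Infinite.natEmbedding k)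
  have eval_eq : eval (fun p => Matrix.diagonal d p.1 p.2)
      (krylovMatrix (genericMatrix k n) 1 n).det = (Matrix.vandermonde d).det := by
    rw [RingHom.map_det, RingHom.mapMatrix_apply, krylovMatrix_map, genericMatrix_map_eval,
      ← krylovMatrix_diagonal_one]
    congr 2
    ext
    simp
  intro h
  rw [h, map_zero] at eval_eq
  exact Matrix.det_vandermonde_ne_zero_iff.mpr d.injective eval_eq.symm

theorem aeval_companionMatrix_charpoly_genericMatrix [Infinite k]
    {f : MvPolynomial (Fin n × Fin n) k} (hf : ∀ g : GL (Fin n) k, conjSubst k n g f = f) :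
    aeval (fun p => companionMatrix n (genericMatrix k n).charpoly p.1 p.2) f = f := by
  refine (eq_of_eval_eq_of_eval_ne_zero det_krylovMatrix_genericMatrix_ne_zero
    fun x hx => ?_).symm
  obtain ⟨A, rfl⟩ : ∃ A : Matrix (Fin n) (Fin n) k, x = fun p => A p.1 p.2 :=
    ⟨Matrix.of fun i j => x (i, j), rfl⟩
  rw [RingHom.map_det, RingHom.mapMatrix_apply, krylovMatrix_map, genericMatrix_map_eval] at hx
  rw [eval_aeval_eq_eval]
  simp only [← Matrix.map_apply (f := eval _), companionMatrix_map, ← Matrix.charpoly_map,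
    genericMatrix_map_eval]
  exact eval_eq_eval_of_mul_eq_mul hf hx
    (mul_krylovMatrix A.charpoly_monic (by simp) A.aeval_self_charpoly _)

theorem mem_of_coeff_charpoly_genericMatrix_mem [Infinite k]
    {f : MvPolynomial (Fin n × Fin n) k} (hf : ∀ g : GL (Fin n) k, conjSubst k n g f = f)
    {S : Subalgebra k (MvPolynomial (Fin n × Fin n) k)}
    (hS : ∀ i, (genericMatrix k n).charpoly.coeff i ∈ S) : f ∈ S := by
  rw [← aeval_companionMatrix_charpoly_genericMatrix hf, aeval_def]
  refine eval₂_mem (fun _ _ => S.algebraMap_mem _) fun p => ?_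
  rw [companionMatrix, Matrix.of_apply]
  split_ifs
  exacts [S.neg_mem (hS _), S.one_mem, S.zero_mem]

end Invariants

theorem stmt_18_general (k : Type*) [Field k] [Infinite k] (n : ℕ) (hn : (n.factorial : k) ≠ 0)
    (f : MvPolynomial (Fin n × Fin n) k)
    (hf : ∀ g : GL (Fin n) k, conjSubst k n g f = f) :
    f ∈ Algebra.adjoin k
      {q : MvPolynomial (Fin n × Fin n) k |
        ∃ ℓ, 1 ≤ ℓ ∧ ℓ ≤ n ∧ q = ((genericMatrix k n) ^ ℓ).trace} := by
  refine mem_of_coeff_charpoly_genericMatrix_mem hf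
    (coeff_charpoly_mem_of_trace_pow_mem _ ?_ fun ℓ h1 hℓ => ?_)
  · rwa [Fintype.card_fin, isUnit_iff_ne_zero]
  · exact Algebra.subset_adjoin ⟨ℓ, h1, hℓ.trans_eq (Fintype.card_fin n), rfl⟩

/-- Every `GLₙ(k)`-invariant polynomial function on `Mₙ(k)` (under conjugation) is a
polynomial in the trace powers `Tr X, Tr (X²), …, Tr (Xⁿ)`. -/
theorem stmt_18 (k : Type*) [Field k] [CharZero k] (n : ℕ)
    (f : MvPolynomial (Fin n × Fin n) k)
    (hf : ∀ g : GL (Fin n) k, conjSubst k n g f = f) :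
    f ∈ Algebra.adjoin k
      {q : MvPolynomial (Fin n × Fin n) k |
        ∃ ℓ, 1 ≤ ℓ ∧ ℓ ≤ n ∧ q = ((genericMatrix k n) ^ ℓ).trace} :=
  stmt_18_general k n (Nat.cast_ne_zero.mpr n.factorial_ne_zero) f hf
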